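/- Let G be a finitely presented group with quadratic Dehn function; that is, for some finite presentation of G there exists C ∈ ℕ with δ_G(n) ≤ C·n² for all n and n² ≤ C·δ_G(Cn) + Cn for all n. Then f_{G,X}(k,m,n) ∼ (n/m)² for any finite generating set X of G, where (n/m)² is regarded as an element of 𝓕 independent of k. -/

import Mathlib

open Function

namespace IsoSpecPaper

variable {ι : Type*} {G : Type*} [Group G]

/-- The (reduced) length of an element of a free group. -/
noncomputable def wnorm (w : FreeGroup ι) : ℕ :=
  @FreeGroup.norm ι (Classical.decEq ι) w

/-- `triv φ k` : the set of words of length at most `k` in the generators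
(and their inverses) representing the identity of `G` under the marking `φ`. -/
noncomputable def triv (φ : FreeGroup ι →* G) (k : ℕ) : Set (FreeGroup ι) :=
  {w | wnorm w ≤ k ∧ φ w = 1}

/-- `AreaLe R w l` : `w` is a product of `l` conjugates of elements of `R` or
their inverses in the free group. -/
def AreaLe (R : Set (FreeGroup ι)) (w : FreeGroup ι) (l : ℕ) : Prop :=
  ∃ L : List (FreeGroup ι × FreeGroup ι), L.length = l ∧
    (∀ p ∈ L, p.2 ∈ R ∨ p.2⁻¹ ∈ R) ∧
    w = (L.map fun p => p.1⁻¹ * p.2 * p.1).prod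

/-- The area of `w` with respect to the set of relators `R`. -/
noncomputable def area (R : Set (FreeGroup ι)) (w : FreeGroup ι) : ℕ :=
  sInf {l | AreaLe R w l}

/-- The isoperimetric spectrum of the marked group `(G, φ)`:
`isoSpec φ k m n = max { area_{S_m}(w) : w ∈ ⟪S_k⟫, ‖w‖ ≤ n }`. -/
noncomputable def isoSpec (φ : FreeGroup ι →* G) (k m n : ℕ) : ℕ :=
  sSup (area (triv φ m) '' {w | w ∈ Subgroup.normalClosure (triv φ k) ∧ wnorm w ≤ n})

/-- The real-valued isoperimetric spectrum. -/
noncomputable def isoSpecR (φ : FreeGroup ι →* G) : ℕ → ℕ → ℕ → ℝ :=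
  fun k m n => (isoSpec φ k m n : ℝ)

/-- The Dehn function of the presentation with relators `R`. -/
noncomputable def dehn (R : Set (FreeGroup ι)) (n : ℕ) : ℕ :=
  sSup (area R '' {w | w ∈ Subgroup.normalClosure R ∧ wnorm w ≤ n})

/-- The quasi-order `f ≼ g` on functions of triples `(k,m,n)` of positive integers
with `m ≥ k`. -/
def SpecLE (f g : ℕ → ℕ → ℕ → ℝ) : Prop :=
  ∃ C : ℕ, 0 < C ∧ ∀ k m n : ℕ, 0 < k → 0 < m → 0 < n → C * k ≤ m →
    f k (C * m) n ≤ C * g (C * k) m (C * n) + C * (n : ℝ) / m + C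

/-- Equivalence of isoperimetric functions: `f ∼ g`. -/
def SpecEquiv (f g : ℕ → ℕ → ℕ → ℝ) : Prop := SpecLE f g ∧ SpecLE g f

/-- The linear spectrum `(k,m,n) ↦ n/m`. -/
noncomputable def linSpec : ℕ → ℕ → ℕ → ℝ := fun _ m n => (n : ℝ) / m

/-- The word length of `g ∈ G` with respect to the marking `φ`. -/
noncomputable def wlen (φ : FreeGroup ι →* G) (g : G) : ℕ :=
  sInf {n | ∃ w : FreeGroup ι, wnorm w = n ∧ φ w = g}

/-- The word metric on `G` with respect to the marking `φ`. -/
noncomputable def wdist (φ : FreeGroup ι →* G) (g h : G) : ℕ := wlen φ (g⁻¹ * h)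

/-- Quasi-isometry of marked groups with respect to their word metrics. -/
noncomputable def QuasiIsometric {H : Type*} [Group H] {κ : Type*}
    (φ : FreeGroup ι →* G) (ψ : FreeGroup κ →* H) : Prop :=
  ∃ L : ℝ, 0 ≤ L ∧ ∃ (α : G → H) (β : H → G),
    (∀ x y : G, (wdist ψ (α x) (α y) : ℝ) ≤ L * wdist φ x y + L) ∧
    (∀ u v : H, (wdist φ (β u) (β v) : ℝ) ≤ L * wdist ψ u v + L) ∧
    (∀ t : H, (wdist ψ (α (β t)) t : ℝ) ≤ L) ∧
    (∀ s : G, (wdist φ (β (α s)) s : ℝ) ≤ L)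

/-- A (combinatorial) geodesic path of length `n` in the Cayley graph of `(G, φ)`:
consecutive vertices are at distance at most `1` and the endpoints are at
distance exactly `n`. -/
noncomputable def IsGeodesic (φ : FreeGroup ι →* G) {n : ℕ} (p : Fin (n + 1) → G) : Prop :=
  (∀ i : Fin n, wdist φ (p i.castSucc) (p i.succ) ≤ 1) ∧
  wdist φ (p 0) (p (Fin.last n)) = n

/-- Every vertex of the path `p` lies within distance `δ` of the set `A`. -/
noncomputable def ThinAt (φ : FreeGroup ι →* G) (δ : ℝ) {n : ℕ}
    (p : Fin (n + 1) → G) (A : Set G) : Prop :=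
  ∀ i, ∃ a ∈ A, (wdist φ (p i) a : ℝ) ≤ δ

/-- The Cayley graph of `(G, φ)` is `δ`-hyperbolic: every geodesic triangle is `δ`-thin. -/
noncomputable def HypConst (φ : FreeGroup ι →* G) (δ : ℝ) : Prop :=
  ∀ (n₁ n₂ n₃ : ℕ) (p : Fin (n₁ + 1) → G) (q : Fin (n₂ + 1) → G) (r : Fin (n₃ + 1) → G),
    IsGeodesic φ p → IsGeodesic φ q → IsGeodesic φ r →
    p (Fin.last n₁) = q 0 → q (Fin.last n₂) = r 0 → r (Fin.last n₃) = p 0 →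
    ThinAt φ δ p (Set.range q ∪ Set.range r) ∧
    ThinAt φ δ q (Set.range r ∪ Set.range p) ∧
    ThinAt φ δ r (Set.range p ∪ Set.range q)

/-- The marked group `(G, φ)` is hyperbolic. -/
noncomputable def IsHyperbolic (φ : FreeGroup ι →* G) : Prop :=
  ∃ δ : ℝ, 0 ≤ δ ∧ HypConst φ δ

/-- `G` (marked by `φ`) is a limit (direct limit) of hyperbolic groups. -/
noncomputable def LimitOfHyperbolic (φ : FreeGroup ι →* G) : Prop :=
  Surjective φ ∧ ∃ R : ℕ → Set (FreeGroup ι),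
    (∀ i j, i ≤ j → R i ⊆ R j) ∧
    φ.ker = Subgroup.normalClosure (⋃ i, R i) ∧
    ∀ i, IsHyperbolic (QuotientGroup.mk' (Subgroup.normalClosure (R i)))

/-- `G` (marked by `φ`) is well-approximated by hyperbolic groups. -/
noncomputable def WellApproximated (φ : FreeGroup ι →* G) : Prop :=
  Surjective φ ∧ ∃ R : ℕ → Set (FreeGroup ι),
    (∀ i j, i ≤ j → R i ⊆ R j) ∧
    φ.ker = Subgroup.normalClosure (⋃ i, R i) ∧
    (∀ i, IsHyperbolic (QuotientGroup.mk' (Subgroup.normalClosure (R i)))) ∧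
    ∃ C : ℕ, 0 < C ∧ ∀ i : ℕ, 0 < i →
      (∀ w : FreeGroup ι, wnorm w ≤ i → φ w = 1 →
        w ∈ Subgroup.normalClosure (R i)) ∧
      HypConst (QuotientGroup.mk' (Subgroup.normalClosure (R i))) ((C * i : ℕ) : ℝ)

/-!
Upper bound. Let `w` have area `A` over relators of length at most `M + 1`. Group the cells of a
disc diagram for `w` into layers around its boundary, in such a way that the polygons bounding the
layers have at most `M * A` vertices altogether. Sorting the layers by depth modulo `m`, one of the
`m` residue classes contributes only `M * A / m` vertices. Between two consecutive layers of this
class every vertex is within `(M + 1) * m` of the outer one, so cutting along the class, keeping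
every `m`-th vertex and joining these by geodesics fills `w` with `O(n / m + A / m ^ 2)` relators
of length `O(m)`.

Lower bound. A word of length at most `m` that is trivial in the group has area at most `C * m ^ 2`
over the given relators, so a filling of `w` by `N` such words gives area at most `N * C * m ^ 2`.
-/

/-- A word in the generators indexed by `ι` and their inverses, not necessarily reduced. -/
abbrev Word (ι : Type*) := List (ι × Bool)

section Words

theorem wnorm_one : wnorm (1 : FreeGroup ι) = 0 :=
  @FreeGroup.norm_one ι (Classical.decEq ι)

theorem wnorm_inv (w : FreeGroup ι) : wnorm w⁻¹ = wnorm w :=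
  @FreeGroup.norm_inv_eq ι (Classical.decEq ι) w

theorem wnorm_mul_le (v w : FreeGroup ι) : wnorm (v * w) ≤ wnorm v + wnorm w :=
  @FreeGroup.norm_mul_le ι (Classical.decEq ι) v w

theorem wnorm_mk_le (l : Word ι) : wnorm (FreeGroup.mk l) ≤ l.length :=
  @FreeGroup.norm_mk_le ι l (Classical.decEq ι)

theorem exists_word (w : FreeGroup ι) : ∃ l, FreeGroup.mk l = w ∧ l.length = wnorm w :=
  ⟨@FreeGroup.toWord ι (Classical.decEq ι) w, @FreeGroup.mk_toWord ι (Classical.decEq ι) w, rfl⟩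

theorem mk_append (l l' : Word ι) :
    FreeGroup.mk (l ++ l') = FreeGroup.mk l * FreeGroup.mk l' :=
  FreeGroup.mul_mk.symm

theorem mk_cons (x : ι × Bool) (l : Word ι) :
    FreeGroup.mk (x :: l) = FreeGroup.mk [x] * FreeGroup.mk l :=
  mk_append [x] l

theorem mk_nil : FreeGroup.mk ([] : Word ι) = 1 :=
  rfl

theorem mk_invRev (l : Word ι) :
    FreeGroup.mk (FreeGroup.invRev l) = (FreeGroup.mk l)⁻¹ :=
  FreeGroup.inv_mk.symm

/-- The inverse of a letter, that is, of a generator or an inverse of a generator. -/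
def invLetter (x : ι × Bool) : ι × Bool :=
  (x.1, !x.2)

theorem mk_invLetter (x : ι × Bool) : FreeGroup.mk [invLetter x] = (FreeGroup.mk [x])⁻¹ :=
  mk_invRev [x]

theorem invLetter_invLetter (x : ι × Bool) : invLetter (invLetter x) = x := by
  simp [invLetter]

end Words

section Area

/-- The word `w` is a product of at most `k` conjugates of elements of `S` and their inverses. -/
def AreaAtMost (S : Set (FreeGroup ι)) (w : FreeGroup ι) (k : ℕ) : Prop :=
  ∃ l ≤ k, AreaLe S w l

variable {R S : Set (FreeGroup ι)} {v w : FreeGroup ι} {j k : ℕ}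

namespace AreaAtMost

theorem mono (h : AreaAtMost S w j) (hjk : j ≤ k) : AreaAtMost S w k :=
  let ⟨l, hl, hw⟩ := h
  ⟨l, hl.trans hjk, hw⟩

theorem mono_set (h : AreaAtMost R w k) (hRS : R ⊆ S) : AreaAtMost S w k :=
  let ⟨l, hl, L, hL, hLR, hw⟩ := h
  ⟨l, hl, L, hL, fun p hp => (hLR p hp).imp (@hRS _) (@hRS _), hw⟩

theorem one : AreaAtMost S 1 0 :=
  ⟨0, le_rfl, [], rfl, by simp, rfl⟩

theorem of_mem (h : w ∈ S) : AreaAtMost S w 1 :=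
  ⟨1, le_rfl, [(1, w)], rfl, by simp [h], by simp⟩

theorem mul (hv : AreaAtMost S v j) (hw : AreaAtMost S w k) : AreaAtMost S (v * w) (j + k) := by
  obtain ⟨_, hj, L, rfl, hL, rfl⟩ := hv
  obtain ⟨_, hk, L', rfl, hL', rfl⟩ := hw
  refine ⟨_, add_le_add hj hk, L ++ L', by simp, fun p hp => ?_, by simp⟩
  exact (List.mem_append.1 hp).elim (hL p) (hL' p)

theorem conj (h : AreaAtMost S w k) (g : FreeGroup ι) : AreaAtMost S (g * w * g⁻¹) k := by
  obtain ⟨_, hk, L, rfl, hL, rfl⟩ := h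
  refine ⟨_, hk, L.map fun p => (p.1 * g⁻¹, p.2), by simp,
    List.forall_mem_map.2 hL, ?_⟩
  rw [← MulAut.conj_apply, map_list_prod]
  congr 1
  simp [mul_assoc]

theorem inv (h : AreaAtMost S w k) : AreaAtMost S w⁻¹ k := by
  obtain ⟨_, hk, L, rfl, hL, rfl⟩ := h
  refine ⟨_, hk, (L.map fun p => (p.1, p.2⁻¹)).reverse, by simp, ?_, ?_⟩
  · simp only [List.mem_reverse, List.forall_mem_map, inv_inv]
    exact fun p hp => (hL p hp).symm
  · rw [List.prod_inv_reverse]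
    simp [mul_assoc, Function.comp_def]

theorem comp (h : AreaAtMost S w j) (hSR : ∀ s ∈ S, AreaAtMost R s k) :
    AreaAtMost R w (j * k) := by
  obtain ⟨_, hj, L, rfl, hL, rfl⟩ := h
  refine mono ?_ (Nat.mul_le_mul_right k hj)
  clear hj
  induction L with
  | nil => simpa using one
  | cons p L ih =>
    have hp : AreaAtMost R p.2 k :=
      (hL p (by simp)).elim (hSR _) fun h => by simpa using (hSR _ h).inv
    have htail := ih fun q hq => hL q (by simp [hq])
    simpa [Nat.succ_mul, Nat.add_comm] using (hp.conj p.1⁻¹).mul htail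

theorem area_le (h : AreaAtMost S w k) : area S w ≤ k :=
  let ⟨_, hl, hw⟩ := h
  (Nat.sInf_le hw).trans hl

theorem exists_of_mem_normalClosure (hw : w ∈ Subgroup.normalClosure S) :
    ∃ k, AreaAtMost S w k := by
  let H : Subgroup (FreeGroup ι) :=
    { carrier := {w | ∃ k, AreaAtMost S w k}
      mul_mem' := fun ⟨_, hv⟩ ⟨_, hw⟩ => ⟨_, hv.mul hw⟩
      one_mem' := ⟨0, one⟩
      inv_mem' := fun ⟨k, hw⟩ => ⟨k, hw.inv⟩ }
  have : H.Normal := ⟨fun _ ⟨k, hw⟩ g => ⟨k, hw.conj g⟩⟩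
  exact Subgroup.normalClosure_le_normal (N := H) (fun s hs => ⟨1, of_mem hs⟩) hw

theorem map_eq_one {φ : FreeGroup ι →* G} {n : ℕ} (h : AreaAtMost (triv φ n) w k) :
    φ w = 1 := by
  obtain ⟨_, -, L, -, hL, rfl⟩ := h
  rw [map_list_prod, List.prod_eq_one]
  simp only [List.mem_map, forall_exists_index, and_imp, forall_apply_eq_imp_iff₂, map_mul,
    map_inv]
  intro p hp
  have : φ p.2 = 1 := (hL p hp).elim (·.2) fun h => by simpa using h.2
  simp [this]

end AreaAtMost

theorem areaAtMost_area (hw : w ∈ Subgroup.normalClosure S) : AreaAtMost S w (area S w) :=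
  let ⟨_, l, _, hl⟩ := AreaAtMost.exists_of_mem_normalClosure hw
  ⟨area S w, le_rfl, Nat.sInf_mem (s := {l | AreaLe S w l}) ⟨l, hl⟩⟩

end Area

section Peeling

theorem append_eq_append_cons {α : Type*} {a b l l' : List α} {x : α}
    (h : l ++ l' = a ++ x :: b) :
    (∃ c, l = a ++ x :: c ∧ b = c ++ l') ∨ ∃ c, a = l ++ c ∧ l' = c ++ x :: b := by
  rcases List.append_eq_append_iff.1 h with h | ⟨_ | ⟨y, c⟩, rfl, hl'⟩
  · exact .inr h
  · exact .inr ⟨[], by simp, hl'.symm⟩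
  · obtain ⟨rfl, rfl⟩ := List.cons_eq_cons.1 hl'
    exact .inl ⟨c, rfl, rfl⟩

theorem exists_letter_of_mk_eq {l : Word ι} {z : ι × Bool}
    (h : FreeGroup.mk l = FreeGroup.mk [z]) :
    ∃ a b, l = a ++ z :: b ∧ FreeGroup.mk a = 1 ∧ FreeGroup.mk b = 1 := by
  obtain ⟨l', hl, hz⟩ := FreeGroup.Red.exact.1 h
  obtain rfl := FreeGroup.Red.singleton_iff.1 hz
  clear h hz
  induction hl using Relation.ReflTransGen.head_induction_on with
  | refl => exact ⟨[], [], rfl, rfl, rfl⟩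
  | head hstep _ ih =>
    obtain ⟨a, b, hab, ha, hb⟩ := ih
    obtain @⟨p, q, i, e⟩ := hstep
    have hpair (l l' : Word ι) :
        FreeGroup.mk (l ++ (i, e) :: (i, !e) :: l') = FreeGroup.mk (l ++ l') :=
      Quot.sound .not
    rcases append_eq_append_cons hab with ⟨c, rfl, rfl⟩ | ⟨c, rfl, rfl⟩
    · exact ⟨a, c ++ (i, e) :: (i, !e) :: q, by simp, ha, (hpair _ _).trans hb⟩
    · exact ⟨p ++ (i, e) :: (i, !e) :: c, b, by simp, (hpair _ _).trans ha, hb⟩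

theorem exists_cancelling_letter {x : ι × Bool} {l : Word ι}
    (h : FreeGroup.mk (x :: l) = 1) :
    ∃ a b, l = a ++ invLetter x :: b ∧ FreeGroup.mk a = 1 ∧ FreeGroup.mk b = 1 := by
  refine exists_letter_of_mk_eq ?_
  rwa [mk_invLetter, eq_inv_iff_mul_eq_one, ← mul_eq_one_comm, ← mk_cons]

/-- The word `f⁻¹ r f` written without cancellation, for `p = (f, r)`: a loop `r` at the end of a
stem. -/
def lollipop (p : Word ι × Word ι) : Word ι :=
  FreeGroup.invRev p.1 ++ (p.2 ++ p.1)

/-- The word obtained by concatenating the lollipops of a list without cancellation. -/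
def bouquet (L : List (Word ι × Word ι)) : Word ι :=
  L.flatMap lollipop

/-- The total length of the stems of a bouquet. -/
def stemLength (L : List (Word ι × Word ι)) : ℕ :=
  (L.map fun p => p.1.length).sum

/-- Every loop of the bouquet `L` is a relator of length at most `k` of the marked group. -/
def IsBouquet (φ : FreeGroup ι →* G) (k : ℕ) (L : List (Word ι × Word ι)) : Prop :=
  ∀ p ∈ L, p.2.length ≤ k ∧ φ (FreeGroup.mk p.2) = 1

/-- The bouquet representing the inverse of a bouquet. -/
def invBouquet (L : List (Word ι × Word ι)) : List (Word ι × Word ι) :=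
  (L.map fun p => (p.1, FreeGroup.invRev p.2)).reverse

variable {φ : FreeGroup ι →* G} {k M : ℕ} {x : ι × Bool}
  {L L' P Q : List (Word ι × Word ι)}

theorem bouquet_cons (p : Word ι × Word ι) :
    bouquet (p :: L) = lollipop p ++ bouquet L :=
  rfl

theorem bouquet_append : bouquet (L ++ L') = bouquet L ++ bouquet L' :=
  List.flatMap_append

theorem stemLength_append : stemLength (L ++ L') = stemLength L + stemLength L' := by
  simp [stemLength]

theorem bouquet_invBouquet : bouquet (invBouquet L) = FreeGroup.invRev (bouquet L) := by
  induction L with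
  | nil => rfl
  | cons p L ih =>
    rw [bouquet_cons, FreeGroup.invRev_append, ← ih]
    simp [bouquet, invBouquet, lollipop]

theorem length_invBouquet : (invBouquet L).length = L.length := by
  simp [invBouquet]

theorem stemLength_invBouquet : stemLength (invBouquet L) = stemLength L := by
  simp [stemLength, invBouquet, Function.comp_def]

theorem isBouquet_append : IsBouquet φ k (L ++ L') ↔ IsBouquet φ k L ∧ IsBouquet φ k L' :=
  List.forall_mem_append

theorem isBouquet_cons {p : Word ι × Word ι} :
    IsBouquet φ k (p :: L) ↔ (p.2.length ≤ k ∧ φ (FreeGroup.mk p.2) = 1) ∧ IsBouquet φ k L :=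
  List.forall_mem_cons

theorem IsBouquet.inv (h : IsBouquet φ k L) : IsBouquet φ k (invBouquet L) := by
  simp only [IsBouquet, invBouquet, List.mem_reverse, List.forall_mem_map, mk_invRev, map_inv,
    inv_eq_one, FreeGroup.invRev_length]
  exact h

theorem IsBouquet.areaAtMost (h : IsBouquet φ k L) :
    AreaAtMost (triv φ k) (FreeGroup.mk (bouquet L)) L.length := by
  induction L with
  | nil => exact .one
  | cons p L ih =>
    obtain ⟨⟨hp, hpφ⟩, hL⟩ := isBouquet_cons.1 h
    have hr : FreeGroup.mk p.2 ∈ triv φ k := ⟨(wnorm_mk_le _).trans hp, hpφ⟩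
    have h := ((AreaAtMost.of_mem hr).conj (FreeGroup.mk p.1)⁻¹).mul (ih hL)
    rw [inv_inv, add_comm] at h
    simpa only [bouquet_cons, lollipop, mk_append, mk_invRev, mul_assoc, List.length_cons] using h

theorem exists_bouquet {w : FreeGroup ι} {A : ℕ} (h : AreaAtMost (triv φ k) w A) :
    ∃ L, IsBouquet φ k L ∧ L.length ≤ A ∧ FreeGroup.mk (bouquet L) = w := by
  obtain ⟨l, hA, C, hl, hC, rfl⟩ := h
  suffices ∃ L, IsBouquet φ k L ∧ L.length = C.length ∧
      FreeGroup.mk (bouquet L) = (C.map fun p => p.1⁻¹ * p.2 * p.1).prod by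
    obtain ⟨L, hL, hLC, hLw⟩ := this
    exact ⟨L, hL, by omega, hLw⟩
  clear hl
  induction C with
  | nil => exact ⟨[], by simp [IsBouquet], rfl, rfl⟩
  | cons p C ih =>
    obtain ⟨hp, hC⟩ := List.forall_mem_cons.1 hC
    obtain ⟨L, hL, hLC, hLw⟩ := ih hC
    have hp : p.2 ∈ triv φ k := hp.elim id fun h => ⟨wnorm_inv p.2 ▸ h.1, by simpa using h.2⟩
    obtain ⟨f, hf, -⟩ := exists_word p.1
    obtain ⟨r, hr, hrl⟩ := exists_word p.2
    refine ⟨(f, r) :: L, isBouquet_cons.2 ⟨⟨hrl.trans_le hp.1, hr ▸ hp.2⟩, hL⟩, by simp [hLC], ?_⟩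
    simp only [bouquet_cons, lollipop, mk_append, mk_invRev, hf, hr, hLw, List.map_cons,
      List.prod_cons, mul_assoc]

theorem exists_lollipop_of_bouquet_eq {a b : Word ι} (h : bouquet L = a ++ x :: b) :
    ∃ P p Q a' b', L = P ++ p :: Q ∧ lollipop p = a' ++ x :: b' ∧
      a = bouquet P ++ a' ∧ b = b' ++ bouquet Q := by
  induction L generalizing a with
  | nil => simp [bouquet] at h
  | cons p L ih =>
    rcases append_eq_append_cons h with ⟨b', hp, rfl⟩ | ⟨c, rfl, hL⟩
    · exact ⟨[], p, L, a, b', rfl, hp, rfl, rfl⟩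
    · obtain ⟨P, q, Q, a', b', rfl, hq, rfl, rfl⟩ := ih hL
      exact ⟨p :: P, q, Q, a', b', rfl, hq, by simp [bouquet_cons], rfl⟩

/-- The letter `x` of a word `a x b` with `a = 1` spelled by the bouquet `L` lies on a loop, which
is then cut open and traded for the word `t`. -/
def OpensLoop (φ : FreeGroup ι →* G) (M : ℕ) (L : List (Word ι × Word ι)) (x : ι × Bool)
    (b : Word ι) : Prop :=
  ∃ t L', t.length ≤ M ∧ φ (FreeGroup.mk t) = φ (FreeGroup.mk [x]) ∧
    IsBouquet φ (M + 1) L' ∧ L'.length + 1 = L.length ∧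
    FreeGroup.mk t * FreeGroup.mk b = FreeGroup.mk (bouquet L')

/-- The letter `x` of a word `a x b` with `a = 1` spelled by the bouquet `L` lies on a stem, on
whose other side it is cancelled. -/
def SplitsStem (φ : FreeGroup ι →* G) (M : ℕ) (L : List (Word ι × Word ι)) (x : ι × Bool)
    (b : Word ι) : Prop :=
  ∃ Q P, IsBouquet φ (M + 1) Q ∧ IsBouquet φ (M + 1) P ∧ Q.length + P.length = L.length ∧
    stemLength Q + stemLength P < stemLength L ∧
    FreeGroup.mk b = FreeGroup.mk (bouquet Q) * (FreeGroup.mk [x])⁻¹ * FreeGroup.mk (bouquet P)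

theorem opensLoop_of_loop {f c d : Word ι}
    (hL : IsBouquet φ (M + 1) (P ++ (f, c ++ x :: d) :: Q))
    (h : FreeGroup.mk (bouquet P) * ((FreeGroup.mk f)⁻¹ * FreeGroup.mk c) = 1) :
    OpensLoop φ M (P ++ (f, c ++ x :: d) :: Q) x (d ++ f ++ bouquet Q) := by
  obtain ⟨hP, ⟨hr, hrφ⟩, hQ⟩ := isBouquet_append.1 hL |>.imp_right isBouquet_cons.1
  refine ⟨FreeGroup.invRev (d ++ c), P ++ Q, ?_, ?_, isBouquet_append.2 ⟨hP, hQ⟩, ?_, ?_⟩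
  · simp only [FreeGroup.invRev_length, List.length_append, List.length_cons] at hr ⊢
    omega
  · rw [mk_append, mk_cons, map_mul, map_mul] at hrφ
    rw [mk_invRev, mk_append, map_inv, map_mul, mul_inv_rev,
      ← eq_inv_of_mul_eq_one_right hrφ, mul_inv_cancel_right]
  · simp only [List.length_append, List.length_cons]
    omega
  · simp only [bouquet_append, mk_append, mk_invRev]
    rw [eq_inv_of_mul_eq_one_left h]
    group

theorem opensLoop_or_splitsStem (hL : IsBouquet φ (M + 1) L) {a b : Word ι}
    (h : bouquet L = a ++ x :: b) (ha : FreeGroup.mk a = 1) :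
    OpensLoop φ M L x b ∨ SplitsStem φ M L x b := by
  obtain ⟨P, ⟨f, r⟩, Q, a', b', rfl, hp, rfl, rfl⟩ := exists_lollipop_of_bouquet_eq h
  obtain ⟨hP, hr, hQ⟩ := isBouquet_append.1 hL |>.imp_right isBouquet_cons.1
  have hPQ : IsBouquet φ (M + 1) (P ++ Q) := isBouquet_append.2 ⟨hP, hQ⟩
  rcases append_eq_append_cons hp with ⟨c, hf, rfl⟩ | ⟨c, rfl, hrf⟩
  · right
    have hlen : f.length = a'.length + (c.length + 1) := by
      simpa using congrArg List.length hf
    have hmk : FreeGroup.mk f =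
        (FreeGroup.mk a' * (FreeGroup.mk [x] * FreeGroup.mk c))⁻¹ := by
      rw [← mk_cons, ← mk_append, ← hf, mk_invRev, inv_inv]
    refine ⟨[(FreeGroup.invRev c, r)], P ++ Q, isBouquet_cons.2 ⟨hr, by simp [IsBouquet]⟩,
      hPQ, ?_, ?_, ?_⟩
    · simp only [List.length_cons, List.length_append, List.length_nil]
      omega
    · simp only [stemLength, List.map_append, List.map_cons, List.map_nil, List.sum_append,
        List.sum_cons, List.sum_nil, FreeGroup.invRev_length, hlen]
      omega
    · simp only [bouquet_append, bouquet_cons, lollipop, mk_append, mk_invRev, hmk] at ha ⊢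
      rw [eq_inv_of_mul_eq_one_left ha]
      simp only [bouquet, List.flatMap_nil, mk_nil]
      group
  rcases append_eq_append_cons hrf with ⟨d, rfl, rfl⟩ | ⟨d, rfl, hf⟩
  · left
    exact opensLoop_of_loop hL (by simpa only [mk_append, mk_invRev] using ha)
  · right
    have hlen : f.length = d.length + (b'.length + 1) := by
      simpa using congrArg List.length hf
    have hmk : FreeGroup.mk f = FreeGroup.mk d * (FreeGroup.mk [x] * FreeGroup.mk b') := by
      rw [← mk_cons, ← mk_append, ← hf]
    refine ⟨[], (d, r) :: (P ++ Q), by simp [IsBouquet], isBouquet_cons.2 ⟨hr, hPQ⟩,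
      ?_, ?_, ?_⟩
    · simp only [List.length_append, List.length_cons, List.length_nil]
      omega
    · simp only [stemLength, List.map_append, List.map_cons, List.map_nil, List.sum_append,
        List.sum_cons, List.sum_nil, hlen]
      omega
    · simp only [bouquet_append, bouquet_cons, lollipop, mk_append, mk_invRev, hmk] at ha ⊢
      rw [eq_inv_of_mul_eq_one_left ha]
      simp only [bouquet, List.flatMap_nil, mk_nil]
      group

theorem SplitsStem.of_inv {c : Word ι}
    (h : SplitsStem φ M (invBouquet L) (invLetter x) (FreeGroup.invRev c)) :
    SplitsStem φ M L x c := by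
  obtain ⟨Q, P, hQ, hP, hlen, hstem, hc⟩ := h
  rw [stemLength_invBouquet] at hstem
  refine ⟨invBouquet P, invBouquet Q, hP.inv, hQ.inv, ?_, ?_, ?_⟩
  · rw [length_invBouquet, length_invBouquet, add_comm, hlen, length_invBouquet]
  · rwa [stemLength_invBouquet, stemLength_invBouquet, add_comm]
  · rw [mk_invRev, mk_invLetter, inv_inv, inv_eq_iff_eq_inv] at hc
    rw [hc, bouquet_invBouquet, bouquet_invBouquet, mk_invRev, mk_invRev]
    group

theorem opensLoop_or_splitsStem_reverse (hL : IsBouquet φ (M + 1) L) {a b : Word ι}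
    (h : bouquet L = a ++ x :: b) (hb : FreeGroup.mk b = 1) :
    OpensLoop φ M L (invLetter x) (FreeGroup.invRev a) ∨ SplitsStem φ M L x a := by
  have hinv : bouquet (invBouquet L) = FreeGroup.invRev b ++ invLetter x :: FreeGroup.invRev a := by
    rw [bouquet_invBouquet, h]
    simp [FreeGroup.invRev, invLetter]
  refine (opensLoop_or_splitsStem hL.inv hinv (by rw [mk_invRev, hb, inv_one])).imp ?_ .of_inv
  rintro ⟨t, L', ht, htx, hL', hlen, hmk⟩
  exact ⟨t, L', ht, htx, hL', hlen.trans length_invBouquet, hmk⟩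

/-- One step of removing the first letter `x` of a relation `x :: v` of area at most `A`: either
`x` is cancelled against a letter of `v`, or it is traded for the rest `t` of a relator. -/
inductive Peeling (φ : FreeGroup ι →* G) (M : ℕ) (x : ι × Bool) : Word ι → ℕ → Prop
  | glue {u v : Word ι} {A B C : ℕ} (hBC : B + C ≤ A)
      (hu : AreaAtMost (triv φ (M + 1)) (FreeGroup.mk u) B)
      (hv : AreaAtMost (triv φ (M + 1)) (FreeGroup.mk v) C) :
      Peeling φ M x (u ++ invLetter x :: v) A
  | face {t v : Word ι} {A B : ℕ} (hB : B + 1 ≤ A) (ht : t.length ≤ M)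
      (htx : φ (FreeGroup.mk t) = φ (FreeGroup.mk [x]))
      (h : AreaAtMost (triv φ (M + 1)) (FreeGroup.mk (t ++ v)) B) :
      Peeling φ M x v A

theorem peeling_of_opensLoop_right {v c : Word ι} (hQ : IsBouquet φ (M + 1) Q)
    (h : OpensLoop φ M P x c) (hv : FreeGroup.mk v = FreeGroup.mk (bouquet Q) * FreeGroup.mk c) :
    Peeling φ M x v (Q.length + P.length) := by
  obtain ⟨t, L, ht, htx, hL, hLP, hc⟩ := h
  refine .face (B := Q.length + L.length) (by omega) ht htx ?_
  convert (hQ.areaAtMost.conj (FreeGroup.mk t)).mul hL.areaAtMost using 1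
  rw [mk_append, hv, ← hc]
  group

theorem peeling_of_opensLoop_left {v c : Word ι} (hP : IsBouquet φ (M + 1) P)
    (h : OpensLoop φ M Q (invLetter x) c)
    (hv : FreeGroup.mk v = (FreeGroup.mk c)⁻¹ * FreeGroup.mk (bouquet P)) :
    Peeling φ M x v (Q.length + P.length) := by
  obtain ⟨t, L, ht, htx, hL, hLQ, hc⟩ := h
  refine .face (t := FreeGroup.invRev t) (B := L.length + P.length) (by omega) (by simpa) ?_ ?_
  · rw [mk_invRev, map_inv, htx, mk_invLetter, map_inv, inv_inv]
  · convert (hL.areaAtMost.inv.conj (FreeGroup.mk t)⁻¹).mul hP.areaAtMost using 1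
    rw [mk_append, mk_invRev, hv, ← hc]
    group

theorem peeling_of_bouquets {v : Word ι} (hQ : IsBouquet φ (M + 1) Q)
    (hP : IsBouquet φ (M + 1) P)
    (hv : FreeGroup.mk v =
      FreeGroup.mk (bouquet Q) * (FreeGroup.mk [x])⁻¹ * FreeGroup.mk (bouquet P)) :
    Peeling φ M x v (Q.length + P.length) := by
  induction hn : stemLength Q + stemLength P using Nat.strong_induction_on generalizing Q P with
  | _ n ih
  subst hn
  -- In this trivial word the letter `x⁻¹` cancels against a letter `x`: one in `v⁻¹` gives a
  -- gluing, one on a loop gives a face, and one on a stem allows the stems to be shortened.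
  have hone :
      FreeGroup.mk (invLetter x :: (bouquet P ++ (FreeGroup.invRev v ++ bouquet Q))) = 1 := by
    rw [mk_cons, mk_append, mk_append, mk_invRev, mk_invLetter, hv]
    group
  obtain ⟨a, b, hab, ha, hb⟩ := exists_cancelling_letter hone
  rw [invLetter_invLetter] at hab
  rcases append_eq_append_cons hab with ⟨c, hPc, rfl⟩ | ⟨c, rfl, hvQ⟩
  · have hPmk : FreeGroup.mk (bouquet P) = FreeGroup.mk [x] * FreeGroup.mk c := by
      rw [hPc, mk_append, ha, one_mul, mk_cons]
    have hvc : FreeGroup.mk v = FreeGroup.mk (bouquet Q) * FreeGroup.mk c := by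
      rw [hv, hPmk, mul_assoc, inv_mul_cancel_left]
    rcases opensLoop_or_splitsStem hP hPc ha with h | ⟨Q', P', hQ', hP', hlen, hstem, hc⟩
    · exact peeling_of_opensLoop_right hQ h hvc
    · have := ih _ (by rw [stemLength_append]; omega) (isBouquet_append.2 ⟨hQ, hQ'⟩) hP'
        (by rw [hvc, hc, bouquet_append, mk_append]; group) rfl
      rwa [List.length_append, add_assoc, hlen] at this
  rcases append_eq_append_cons hvQ with ⟨d, hvd, rfl⟩ | ⟨d, rfl, hQd⟩
  · have hv' : v = FreeGroup.invRev d ++ invLetter x :: FreeGroup.invRev c := by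
      rw [← FreeGroup.invRev_invRev (L₁ := v), hvd]
      simp [FreeGroup.invRev, invLetter]
    rw [mk_append] at ha hb
    subst hv'
    refine .glue le_rfl ?_ ?_
    · rw [mk_invRev, inv_eq_of_mul_eq_one_right hb]
      exact hQ.areaAtMost
    · rw [mk_invRev, inv_eq_of_mul_eq_one_left ha]
      exact hP.areaAtMost
  · have hvd : FreeGroup.mk v = FreeGroup.mk d * FreeGroup.mk (bouquet P) := by
      rw [hv, hQd, mk_append, mk_cons, hb]
      group
    rcases opensLoop_or_splitsStem_reverse hQ hQd hb with h | ⟨Q', P', hQ', hP', hlen, hstem, hd⟩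
    · exact peeling_of_opensLoop_left hP h (by rw [hvd, mk_invRev, inv_inv])
    · have := ih _ (by rw [stemLength_append]; omega) hQ' (isBouquet_append.2 ⟨hP', hP⟩)
        (by rw [hvd, hd, bouquet_append, mk_append]; group) rfl
      rwa [List.length_append, ← add_assoc, hlen] at this

theorem AreaAtMost.peel {v : Word ι} {A : ℕ}
    (h : AreaAtMost (triv φ (M + 1)) (FreeGroup.mk (x :: v)) A) : Peeling φ M x v A := by
  obtain ⟨P, hP, hPA, hPmk⟩ := exists_bouquet h
  have hpeel := peeling_of_bouquets (x := x) (v := v) (Q := []) (by simp [IsBouquet]) hP (by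
    rw [hPmk, mk_cons x v, bouquet, List.flatMap_nil, mk_nil, one_mul, inv_mul_cancel_left])
  rw [List.length_nil, zero_add] at hpeel
  cases hpeel with
  | glue hBC hu hv => exact .glue (hBC.trans hPA) hu hv
  | face hB ht htx h => exact .face (hB.trans hPA) ht htx h

end Peeling

section Layering

/-- Record a layer of length `n` in the layer counts `c`: the depths are shifted by one, and depth
`m - 1` becomes depth `0` modulo `m`. -/
def shift (m n : ℕ) (c : ℕ → ℕ) : ℕ → ℕ
  | 0 => c (m - 1) + n
  | r + 1 => c r

/-- The decomposition of a disk with boundary word `s ++ t` into layers around its boundary. The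
part `s` of the boundary is removed letter by letter from the current layer while `t`, already
removed, bounds the next layer; `c r` is the total length of the layers whose depth, counted from
the current layer on, is congruent to `r` modulo `m`. -/
inductive Layering (φ : FreeGroup ι →* G) (M m : ℕ) : Word ι → Word ι → (ℕ → ℕ) → Prop
  | nil : Layering φ M m [] [] 0
  | face {x : ι × Bool} {s t t' : Word ι} {c : ℕ → ℕ} (ht' : t'.length ≤ M)
      (hx : φ (FreeGroup.mk t') = φ (FreeGroup.mk [x])) (h : Layering φ M m s (t ++ t') c) :
      Layering φ M m (x :: s) t c
  | glueSame {x : ι × Bool} {u v t : Word ι} {c c' : ℕ → ℕ} (hu : Layering φ M m u [] c)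
      (hv : Layering φ M m v t c') :
      Layering φ M m (x :: (u ++ invLetter x :: v)) t (c + c')
  | glueNext {x : ι × Bool} {s t t' : Word ι} {c c' : ℕ → ℕ} (hs : Layering φ M m s t c)
      (ht' : Layering φ M m [] t' c') :
      Layering φ M m (x :: s) (t ++ invLetter x :: t') (c + c')
  | descend {t : Word ι} {c : ℕ → ℕ} (h : Layering φ M m t [] c) :
      Layering φ M m [] t (shift m t.length c)

variable {φ : FreeGroup ι →* G} {M m : ℕ} {s t : Word ι} {c : ℕ → ℕ}

theorem sum_shift (hm : 0 < m) (n : ℕ) (c : ℕ → ℕ) :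
    ∑ r ∈ Finset.range m, shift m n c r = ∑ r ∈ Finset.range m, c r + n := by
  obtain ⟨m, rfl⟩ := Nat.exists_eq_succ_of_ne_zero hm.ne'
  rw [Finset.sum_range_succ', Finset.sum_range_succ]
  simp only [shift, Nat.succ_eq_add_one, add_tsub_cancel_right]
  omega

theorem Layering.map_eq_one (h : Layering φ M m s t c) : φ (FreeGroup.mk (s ++ t)) = 1 := by
  induction h with
  | nil => exact map_one φ
  | @face x s t t' _ _ hx _ ih =>
    rw [mk_append, mk_append, ← mul_assoc, map_mul, mul_eq_one_comm] at ih
    rwa [List.cons_append, mk_cons, mk_append, map_mul, ← hx]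
  | @glueSame x u v t _ _ _ _ ihu ihv =>
    change φ (FreeGroup.mk ([x] ++ (u ++ ([invLetter x] ++ v)) ++ t)) = 1
    simp only [List.append_nil, mk_append, map_mul] at ihu ihv
    simp only [mk_append, mk_invLetter, map_mul, map_inv, mul_assoc, ihu, ihv, one_mul, mul_one,
      mul_inv_cancel]
  | @glueNext x s t t' _ _ _ _ ih ih' =>
    change φ (FreeGroup.mk ([x] ++ s ++ (t ++ ([invLetter x] ++ t')))) = 1
    simp only [List.nil_append, mk_append, map_mul] at ih ih'
    simp only [mk_append, mk_invLetter, map_mul, map_inv, ih', mul_one]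
    rw [← mul_assoc, mul_assoc (φ _), ih, mul_one, mul_inv_cancel]
  | descend _ ih => simpa using ih

theorem exists_layering (hm : 0 < m) (s t : Word ι) {A : ℕ}
    (h : AreaAtMost (triv φ (M + 1)) (FreeGroup.mk (s ++ t)) A) :
    ∃ c, Layering φ M m s t c ∧ ∑ r ∈ Finset.range m, c r ≤ t.length + M * A := by
  match s, t with
  | [], [] => exact ⟨0, .nil, by simp⟩
  | [], y :: t =>
    obtain ⟨c, hc, hcA⟩ := exists_layering hm (y :: t) [] (by simpa using h)
    rw [List.length_nil, zero_add] at hcA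
    exact ⟨_, .descend hc, by rw [sum_shift hm]; omega⟩
  | x :: s, t =>
    have hpeel : Peeling φ M x (s ++ t) A := AreaAtMost.peel h
    generalize hv : s ++ t = v at hpeel
    cases hpeel with
    | @face t' _ _ B hB ht' hx hB' =>
      have hMB : M * B + M ≤ M * A := Nat.mul_le_mul_left M hB
      subst hv
      have hrot : AreaAtMost (triv φ (M + 1)) (FreeGroup.mk (s ++ (t ++ t'))) B := by
        convert hB'.conj (FreeGroup.mk t')⁻¹ using 1
        simp only [mk_append]
        group
      obtain ⟨c, hc, hcA⟩ := exists_layering hm s (t ++ t') hrot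
      refine ⟨c, .face ht' hx hc, ?_⟩
      rw [List.length_append] at hcA
      omega
    | @glue u v _ B C hBC hu hv' =>
      have hMBC : M * B + M * C ≤ M * A := by
        rw [← mul_add]
        exact Nat.mul_le_mul_left M hBC
      rcases append_eq_append_cons hv with ⟨v', hs, rfl⟩ | ⟨u', rfl, ht⟩
      · have : s.length = u.length + (v'.length + 1) := by simp [hs]
        obtain ⟨c, hc, hcB⟩ := exists_layering hm u [] (by simpa using hu)
        obtain ⟨c', hc', hcC⟩ := exists_layering hm v' t hv'
        refine ⟨c + c', hs ▸ .glueSame hc hc', ?_⟩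
        simp only [Pi.add_apply, Finset.sum_add_distrib, List.length_nil] at hcB ⊢
        omega
      · have : t.length = u'.length + (v.length + 1) := by simp [ht]
        obtain ⟨c, hc, hcB⟩ := exists_layering hm s u' hu
        obtain ⟨c', hc', hcC⟩ := exists_layering hm [] v hv'
        refine ⟨c + c', ht ▸ .glueNext hc hc', ?_⟩
        simp only [Pi.add_apply, Finset.sum_add_distrib]
        omega
-- Removing a relator lowers the area by one, which pays for the at most `M` letters added to `t`.
termination_by 3 * (M * A) + 2 * s.length + 3 * t.length
decreasing_by
  all_goals simp only [List.length_cons, List.length_append, List.length_nil]; omega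

end Layering

section WordMetric

variable {φ : FreeGroup ι →* G}

theorem wlen_le (w : FreeGroup ι) : wlen φ (φ w) ≤ wnorm w :=
  Nat.sInf_le ⟨w, rfl, rfl⟩

theorem exists_wnorm_eq_wlen (hφ : Surjective φ) (g : G) : ∃ w, φ w = g ∧ wnorm w = wlen φ g := by
  obtain ⟨w, hw⟩ := hφ g
  obtain ⟨v, hv, hvg⟩ := Nat.sInf_mem (s := {n | ∃ w, wnorm w = n ∧ φ w = g}) ⟨_, w, rfl, hw⟩
  exact ⟨v, hvg, hv⟩

theorem wlen_inv (g : G) : wlen φ g⁻¹ = wlen φ g := by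
  refine congrArg sInf (Set.ext fun n => ⟨?_, ?_⟩) <;> rintro ⟨w, rfl, hw⟩ <;>
    exact ⟨w⁻¹, wnorm_inv w, by simp [hw]⟩

theorem wdist_comm (g h : G) : wdist φ g h = wdist φ h g := by
  rw [wdist, ← wlen_inv, mul_inv_rev, inv_inv, wdist]

theorem wdist_mul_right_le (g : G) (w : FreeGroup ι) : wdist φ g (g * φ w) ≤ wnorm w := by
  rw [wdist, inv_mul_cancel_left]
  exact wlen_le w

theorem wdist_self (g : G) : wdist φ g g = 0 := by
  simpa [wnorm_one] using wdist_mul_right_le (φ := φ) g 1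

theorem wdist_triangle (hφ : Surjective φ) (a b c : G) :
    wdist φ a c ≤ wdist φ a b + wdist φ b c := by
  obtain ⟨v, hv, hvn⟩ := exists_wnorm_eq_wlen hφ (a⁻¹ * b)
  obtain ⟨w, hw, hwn⟩ := exists_wnorm_eq_wlen hφ (b⁻¹ * c)
  rw [wdist, wdist, wdist, ← hvn, ← hwn, show a⁻¹ * c = φ (v * w) by rw [map_mul, hv, hw]; group]
  exact (wlen_le _).trans (wnorm_mul_le v w)

theorem wdist_mul_left_le (hφ : Surjective φ) (g c : G) (w : FreeGroup ι) :
    wdist φ (g * φ w) c ≤ wdist φ g c + wnorm w :=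
  calc wdist φ (g * φ w) c ≤ wdist φ (g * φ w) g + wdist φ g c := wdist_triangle hφ _ _ _
    _ = wdist φ g c + wdist φ g (g * φ w) := by rw [wdist_comm, add_comm]
    _ ≤ wdist φ g c + wnorm w := by grw [wdist_mul_right_le]

/-- A choice of a geodesic word from each element of `G` to each other one, in which the word from
`d` to `c` is the inverse of the word from `c` to `d`. -/
structure IsGeodesicSystem (φ : FreeGroup ι →* G) (geo : G → G → FreeGroup ι) : Prop where
  refl (c : G) : geo c c = 1
  symm (c d : G) : geo d c = (geo c d)⁻¹
  map (c d : G) : φ (geo c d) = c⁻¹ * d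
  wnorm_le (c d : G) : wnorm (geo c d) ≤ wdist φ c d

theorem exists_isGeodesicSystem (hφ : Surjective φ) : ∃ geo, IsGeodesicSystem φ geo := by
  classical
  choose short hshort hnorm using exists_wnorm_eq_wlen hφ
  refine ⟨fun c d => if c = d then 1 else if WellOrderingRel c d then short (c⁻¹ * d)
    else (short (d⁻¹ * c))⁻¹, fun c => by simp, fun c d => ?_, fun c d => ?_, fun c d => ?_⟩
  · rcases trichotomous_of WellOrderingRel c d with h | rfl | h
    · simp [h, asymm_of _ h, (ne_of_irrefl h), (ne_of_irrefl h).symm]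
    · simp
    · simp [h, asymm_of _ h, (ne_of_irrefl h), (ne_of_irrefl h).symm]
  · split_ifs with hcd h
    · simp [hcd]
    · exact hshort _
    · simp [hshort]
  · split_ifs with hcd h
    · simp [wnorm_one]
    · exact (hnorm _).le
    · rw [wnorm_inv, hnorm, wdist_comm, wdist]

end WordMetric

section Polygons

variable {X : Type*}

/-- The concatenation of the geodesics along the points `a`, `U`, `b`. -/
def polyPath (geo : X → X → FreeGroup ι) : X → List X → X → FreeGroup ι
  | a, [], b => geo a b
  | a, c :: U, b => geo a c * polyPath geo c U b

open Classical in
/-- The number of nontrivial sides of the polygonal path along the points `a`, `U`, `b`. -/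
noncomputable def numSides : X → List X → X → ℕ
  | a, [], b => if a = b then 0 else 1
  | a, c :: U, b => (if a = c then 0 else 1) + numSides c U b

/-- The closed geodesic polygon with the given list of vertices has area at most `3 (q - 2) + K`,
where `q` is its number of nontrivial sides. The factor `3` leaves room for comparing polygons; the
case `q < 2`, in which the polygon is trivial, relies on truncated subtraction. -/
def PolygonBound (geo : X → X → FreeGroup ι) (S : Set (FreeGroup ι)) : List X → ℕ → Prop
  | [], _ => True
  | c :: U, K => AreaAtMost S (polyPath geo c U c) (3 * (numSides c U c - 2) + K)

/-- All geodesic triangles with vertices in `B` have area at most one. -/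
def SmallTriangles (geo : X → X → FreeGroup ι) (S : Set (FreeGroup ι)) (B : Set X) : Prop :=
  ∀ c ∈ B, ∀ d ∈ B, ∀ e ∈ B, AreaAtMost S (geo c d * (geo d e * geo e c)) 1

/-- The first and the last entry of the list, if any, belong to `B`. -/
def EndsIn (B : Set X) (U : List X) : Prop :=
  (∀ d ∈ U.head?, d ∈ B) ∧ ∀ e ∈ U.getLast?, e ∈ B

variable {geo : X → X → FreeGroup ι} {S : Set (FreeGroup ι)} {B : Set X} {U V : List X}
  {a b c : X} {K : ℕ}

theorem polyPath_append :
    polyPath geo a (U ++ c :: V) b = polyPath geo a U c * polyPath geo c V b := by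
  induction U generalizing a with
  | nil => rfl
  | cons d U ih => rw [List.cons_append, polyPath, ih, polyPath, mul_assoc]

theorem numSides_append : numSides a (U ++ c :: V) b = numSides a U c + numSides c V b := by
  induction U generalizing a with
  | nil => rfl
  | cons d U ih => rw [List.cons_append, numSides, ih, numSides, add_assoc]

theorem numSides_pos (hab : a ≠ b) : 0 < numSides a U b := by
  induction U generalizing a with
  | nil => simp [numSides, hab]
  | cons c U ih =>
    by_cases hac : a = c
    · simp [numSides, hac, ih (hac ▸ hab)]
    · simp [numSides, hac]

theorem numSides_eq_zero (h : numSides c U c ≤ 1) : numSides c U c = 0 := by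
  induction U with
  | nil => simp [numSides]
  | cons d U ih =>
    rw [numSides] at h ⊢
    by_cases hcd : c = d
    · subst hcd
      simp only [if_true] at h ⊢
      rw [ih (by omega)]
    · have := numSides_pos (U := U) (Ne.symm hcd)
      simp only [hcd, if_false] at h
      omega

theorem numSides_replicate_le (a b : X) (k : ℕ) : numSides a (List.replicate k a) b ≤ 1 := by
  induction k with
  | zero => simp only [List.replicate_zero, numSides]; split_ifs <;> omega
  | succ k ih => simpa [List.replicate_succ, numSides] using ih

theorem EndsIn.append_singleton (h : EndsIn B U) (hc : c ∈ B) : EndsIn B (U ++ [c]) := by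
  refine ⟨?_, by simpa using hc⟩
  cases U with
  | nil => simpa using hc
  | cons d U => simpa using h.1

theorem PolygonBound.rotate (h : PolygonBound geo S (U ++ V) K) :
    PolygonBound geo S (V ++ U) K := by
  rcases U with _ | ⟨c, U⟩
  · simpa using h
  rcases V with _ | ⟨d, V⟩
  · simpa using h
  rw [List.cons_append, PolygonBound, polyPath_append, numSides_append] at h ⊢
  convert h.conj (polyPath geo c U d)⁻¹ using 1
  · group
  · rw [add_comm (numSides c U d)]

theorem PolygonBound.mono (h : PolygonBound geo S U K) {K' : ℕ} (hK : K ≤ K') :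
    PolygonBound geo S U K' := by
  cases U with
  | nil => trivial
  | cons c U => exact AreaAtMost.mono h (Nat.add_le_add_left hK _)

end Polygons

section GeodesicPolygons

variable {φ : FreeGroup ι →* G} {geo : G → G → FreeGroup ι} {S : Set (FreeGroup ι)} {B : Set G}
  {U V : List G} {a b c d : G} {K K' : ℕ}

theorem polyPath_eq_geo (hg : IsGeodesicSystem φ geo) (h : numSides a U b ≤ 1) :
    polyPath geo a U b = geo a b := by
  induction U generalizing a with
  | nil => rfl
  | cons c U ih =>
    rw [numSides] at h
    rw [polyPath, ih (by omega)]
    by_cases hac : a = c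
    · rw [hac, hg.refl, one_mul]
    · have hcb : c = b := by
        by_contra hcb
        have := numSides_pos (U := U) hcb
        simp only [hac, if_false] at h
        omega
      rw [hcb, hg.refl, mul_one]

theorem polyPath_eq_one (hg : IsGeodesicSystem φ geo) (h : numSides c U c ≤ 2) :
    polyPath geo c U c = 1 := by
  induction U with
  | nil => exact hg.refl c
  | cons d U ih =>
    rw [numSides] at h
    rw [polyPath]
    by_cases hcd : c = d
    · subst hcd
      rw [hg.refl, one_mul, ih (by omega)]
    · simp only [hcd, if_false] at h
      rw [polyPath_eq_geo hg (by omega), hg.symm c d, mul_inv_cancel]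

namespace PolygonBound

theorem of_numSides_le_two (hg : IsGeodesicSystem φ geo) (h : numSides c U c ≤ 2) :
    PolygonBound geo S (c :: U) K := by
  rw [PolygonBound, polyPath_eq_one hg h]
  exact AreaAtMost.one.mono (Nat.zero_le _)

theorem chord (hg : IsGeodesicSystem φ geo) (hU : PolygonBound geo S (c :: (U ++ [d])) K)
    (hV : PolygonBound geo S (d :: (V ++ [c])) K') :
    PolygonBound geo S (c :: (U ++ d :: V)) (K + K') := by
  rw [PolygonBound, polyPath_append, numSides_append] at hU hV ⊢
  convert (hU.mul (hV.conj (geo c d))).mono ?_ using 1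
  · simp only [polyPath, hg.symm c d]
    group
  · by_cases hcd : c = d
    · subst hcd
      simp only [numSides, if_true]
      omega
    · have := numSides_pos (U := U) hcd
      have := numSides_pos (U := V) (Ne.symm hcd)
      simp only [numSides, hcd, Ne.symm hcd, if_false]
      omega

theorem triangle (hg : IsGeodesicSystem φ geo) (hB : SmallTriangles geo S B) {e : G}
    (hc : c ∈ B) (hd : d ∈ B) (he : e ∈ B) : PolygonBound geo S [c, d, e] 0 := by
  rcases Nat.lt_or_ge 2 (numSides c [d, e] c) with h | h
  · exact (hB c hc d hd e he).mono (by omega)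
  · exact of_numSides_le_two hg h

theorem cons (hg : IsGeodesicSystem φ geo) (hB : SmallTriangles geo S B)
    (hU : PolygonBound geo S U K) (hUB : EndsIn B U) (hc : c ∈ B) :
    PolygonBound geo S (c :: U) K := by
  rcases U with _ | ⟨d, U⟩
  · exact of_numSides_le_two hg (by simp [numSides])
  rcases List.eq_nil_or_concat U with rfl | ⟨U, e, rfl⟩
  · exact of_numSides_le_two hg (by simp only [numSides]; split_ifs <;> omega)
  rw [List.concat_eq_append] at hU hUB ⊢
  have he : e ∈ B := hUB.2 e (by rw [← List.cons_append, List.getLast?_concat]; rfl)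
  have h := chord (V := [c]) hg hU (triangle hg hB he hc (hUB.1 d rfl))
  exact rotate (U := d :: (U ++ [e])) (V := [c]) (by simpa using h)

theorem glue (hg : IsGeodesicSystem φ geo) (hB : SmallTriangles geo S B)
    (hU : PolygonBound geo S U K) (hV : PolygonBound geo S V K') (hUB : EndsIn B U)
    (hVB : EndsIn B V) (hc : c ∈ B) (hd : d ∈ B) :
    PolygonBound geo S (c :: (U ++ d :: V)) (K + K') :=
  chord hg
    (cons hg hB (rotate (U := [d]) (cons hg hB hU hUB hd)) (hUB.append_singleton hd) hc)
    (cons hg hB (rotate (U := [c]) (cons hg hB hV hVB hc)) (hVB.append_singleton hc) hd)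

theorem of_cons_cons_self (hg : IsGeodesicSystem φ geo) (h : PolygonBound geo S (c :: c :: U) K) :
    PolygonBound geo S (c :: U) K := by
  simpa only [PolygonBound, polyPath, numSides, hg.refl, one_mul, if_true, zero_add] using h

theorem cons_of_replicate (hg : IsGeodesicSystem φ geo) (hB : SmallTriangles geo S B) (k : ℕ)
    (hU : PolygonBound geo S (List.replicate k c ++ U) K) (hUB : EndsIn B U) (hc : c ∈ B) :
    PolygonBound geo S (c :: U) K := by
  induction k with
  | zero => exact cons hg hB hU hUB hc
  | succ k ih =>
    cases k with
    | zero => exact hU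
    | succ k => exact ih (of_cons_cons_self hg hU)

end PolygonBound

end GeodesicPolygons

section Labellings

/-- The ball of radius `r` about `g` in the word metric. -/
def wball (φ : FreeGroup ι →* G) (g : G) (r : ℕ) : Set G :=
  {c | wdist φ g c ≤ r}

/-- The vertices, starting from `g`, of the path in the Cayley graph along a word are labelled by
points at distance at most `N`; the endpoint of the path is not labelled. -/
inductive IsLabelling (φ : FreeGroup ι →* G) (N : ℕ) : G → Word ι → List G → Prop
  | nil (g : G) : IsLabelling φ N g [] []
  | cons {g c : G} {x : ι × Bool} {l : Word ι} {C : List G} (hc : c ∈ wball φ g N)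
      (h : IsLabelling φ N (g * φ (FreeGroup.mk [x])) l C) : IsLabelling φ N g (x :: l) (c :: C)

variable {φ : FreeGroup ι →* G} {g c : G} {N N' : ℕ} {l l' : Word ι} {C C' D : List G}

theorem mul_map_mk_cons (g : G) (x : ι × Bool) (l : Word ι) :
    g * φ (FreeGroup.mk (x :: l)) = g * φ (FreeGroup.mk [x]) * φ (FreeGroup.mk l) := by
  rw [mk_cons x l, map_mul, mul_assoc]

theorem mul_map_mk_append (g : G) (l l' : Word ι) :
    g * φ (FreeGroup.mk (l ++ l')) = g * φ (FreeGroup.mk l) * φ (FreeGroup.mk l') := by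
  rw [mk_append, map_mul, mul_assoc]

theorem mem_wball_mul_map (hφ : Surjective φ) {r : ℕ} (h : c ∈ wball φ g r) (w : FreeGroup ι) :
    c ∈ wball φ (g * φ w) (r + wnorm w) := by
  have := wdist_mul_left_le hφ g c w
  have : wdist φ g c ≤ r := h
  change wdist φ _ c ≤ _
  omega

theorem mem_wball_mul_map_mk (hφ : Surjective φ) {r : ℕ} (h : c ∈ wball φ g r) (l : Word ι) :
    c ∈ wball φ (g * φ (FreeGroup.mk l)) (r + l.length) :=
  (mem_wball_mul_map hφ h _).trans (Nat.add_le_add_left (wnorm_mk_le l) r)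

theorem wball_subset_wball_mul_map_mk (hφ : Surjective φ) (x : ι × Bool) {r s : ℕ} (h : r + 1 ≤ s) :
    wball φ g r ⊆ wball φ (g * φ (FreeGroup.mk [x])) s :=
  fun _ hc => le_trans (mem_wball_mul_map_mk hφ hc [x]) h

theorem wball_mono {r s : ℕ} (h : r ≤ s) : wball φ g r ⊆ wball φ g s :=
  fun _ hc => le_trans hc h

namespace IsLabelling

theorem mono (h : IsLabelling φ N g l C) (hN : N ≤ N') : IsLabelling φ N' g l C := by
  induction h with
  | nil => exact .nil _
  | cons hc _ ih => exact .cons (hc.trans hN) ih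

theorem append (h : IsLabelling φ N g l C)
    (h' : IsLabelling φ N (g * φ (FreeGroup.mk l)) l' C') :
    IsLabelling φ N g (l ++ l') (C ++ C') := by
  induction h with
  | nil => simpa [mk_nil] using h'
  | cons hc _ ih => exact .cons hc (ih (by rwa [← mul_map_mk_cons]))

theorem exists_append (h : IsLabelling φ N g (l ++ l') D) :
    ∃ C C', D = C ++ C' ∧ IsLabelling φ N g l C ∧
      IsLabelling φ N (g * φ (FreeGroup.mk l)) l' C' := by
  induction l generalizing g D with
  | nil => exact ⟨[], D, rfl, .nil g, by simpa [mk_nil] using h⟩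
  | cons x l ih =>
    cases h with
    | cons hc h =>
      obtain ⟨C, C', rfl, hC, hC'⟩ := ih h
      exact ⟨_ :: C, C', rfl, .cons hc hC, mul_map_mk_cons g x l ▸ hC'⟩

theorem head_mem (h : IsLabelling φ N g l C) : ∀ d ∈ C.head?, d ∈ wball φ g N := by
  cases h with
  | nil => simp
  | cons hc => simpa using hc

theorem getLast_mem (hφ : Surjective φ) (h : IsLabelling φ N g l C) :
    ∀ e ∈ C.getLast?, e ∈ wball φ (g * φ (FreeGroup.mk l)) (N + 1) := by
  induction h with
  | nil => simp
  | @cons g c x l C hc h ih =>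
    rw [mul_map_mk_cons]
    cases h with
    | nil => simpa [mk_nil] using mem_wball_mul_map_mk hφ hc [x]
    | cons => simpa using ih

theorem endsIn (hφ : Surjective φ) (h : IsLabelling φ N g l C) {B : Set G}
    (hhead : wball φ g N ⊆ B) (hlast : wball φ (g * φ (FreeGroup.mk l)) (N + 1) ⊆ B) :
    EndsIn B C :=
  ⟨fun d hd => hhead (h.head_mem d hd), fun e he => hlast (h.getLast_mem hφ e he)⟩

theorem replicate (hφ : Surjective φ) (hc : c ∈ wball φ g N) (hl : l.length ≤ N') :
    IsLabelling φ (N + N') g l (List.replicate l.length c) := by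
  induction l generalizing g N N' with
  | nil => exact .nil g
  | cons x l ih =>
    rw [List.length_cons] at hl
    refine .cons (wball_mono (Nat.le_add_right N N') hc) ?_
    refine (ih (mem_wball_mul_map_mk hφ hc [x]) (N' := N' - 1) (by omega)).mono ?_
    rw [List.length_singleton]
    omega

end IsLabelling

end Labellings

section Comparison

variable {φ : FreeGroup ι →* G} {geo : G → G → FreeGroup ι} {g c d c' d' : G} {N T n K : ℕ}
  {l : Word ι} {U V : List G}

theorem wdist_le_of_mem_wball (hφ : Surjective φ) (hc : c ∈ wball φ g T) (hd : d ∈ wball φ g T) :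
    wdist φ c d ≤ 2 * T := by
  have h := wdist_triangle hφ c g d
  rw [wdist_comm c g] at h
  have : wdist φ g c ≤ T := hc
  have : wdist φ g d ≤ T := hd
  omega

theorem wnorm_geo_le (hφ : Surjective φ) (hg : IsGeodesicSystem φ geo)
    (hc : c ∈ wball φ g T) (hd : d ∈ wball φ g T) : wnorm (geo c d) ≤ 2 * T :=
  (hg.wnorm_le c d).trans (wdist_le_of_mem_wball hφ hc hd)

theorem smallTriangles_wball (hφ : Surjective φ) (hg : IsGeodesicSystem φ geo) (g : G) (T : ℕ) :
    SmallTriangles geo (triv φ (8 * T)) (wball φ g T) := by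
  intro c hc d hd e he
  refine .of_mem ⟨?_, by simp only [map_mul, hg.map]; group⟩
  have := wnorm_mul_le (geo c d) (geo d e * geo e c)
  have := wnorm_mul_le (geo d e) (geo e c)
  have := wnorm_geo_le hφ hg hc hd
  have := wnorm_geo_le hφ hg hd he
  have := wnorm_geo_le hφ hg he hc
  omega

theorem areaAtMost_quadrilateral (hφ : Surjective φ) (hg : IsGeodesicSystem φ geo)
    (hc : c ∈ wball φ g T) (hd : d ∈ wball φ g T) (hc' : c' ∈ wball φ g T)
    (hd' : d' ∈ wball φ g T) :
    AreaAtMost (triv φ (8 * T)) (geo c c' * geo c' d' * (geo d d')⁻¹ * (geo c d)⁻¹)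
      (numSides c [] c' + numSides d [] d') := by
  by_cases h : c = c' ∧ d = d'
  · obtain ⟨rfl, rfl⟩ := h
    simpa [hg.refl] using AreaAtMost.one.mono (Nat.zero_le _)
  refine AreaAtMost.mono (.of_mem ⟨?_, by simp only [map_mul, map_inv, hg.map]; group⟩) ?_
  · have := wnorm_mul_le (geo c c' * geo c' d' * (geo d d')⁻¹) (geo c d)⁻¹
    have := wnorm_mul_le (geo c c' * geo c' d') (geo d d')⁻¹
    have := wnorm_mul_le (geo c c') (geo c' d')
    have := wnorm_inv (geo c d)
    have := wnorm_inv (geo d d')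
    have := wnorm_geo_le hφ hg hc hc'
    have := wnorm_geo_le hφ hg hc' hd'
    have := wnorm_geo_le hφ hg hd hd'
    have := wnorm_geo_le hφ hg hc hd
    omega
  · rcases not_and_or.1 h with h | h
    · exact (numSides_pos h).trans_le (Nat.le_add_right _ _)
    · exact (numSides_pos h).trans_le (Nat.le_add_left _ _)

theorem areaAtMost_ladder (hφ : Surjective φ) (hg : IsGeodesicSystem φ geo) (hN : N + 1 ≤ T)
    (hU : IsLabelling φ N g l U) (hV : IsLabelling φ N g l V) (hc : c ∈ wball φ g T)
    (hd : d ∈ wball φ g T) (hc' : c' ∈ wball φ (g * φ (FreeGroup.mk l)) T)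
    (hd' : d' ∈ wball φ (g * φ (FreeGroup.mk l)) T) :
    AreaAtMost (triv φ (8 * T))
      (polyPath geo c U c' * geo c' d' * (polyPath geo d V d')⁻¹ * (geo c d)⁻¹)
      (numSides c U c' + numSides d V d') := by
  induction hU generalizing c d V with
  | nil g =>
    cases hV
    rw [mk_nil, map_one, mul_one] at hc' hd'
    exact areaAtMost_quadrilateral hφ hg hc hd hc' hd'
  | @cons g e x l U he _ ih =>
    obtain _ | @⟨_, f, _, _, V, hf, hV⟩ := hV
    rw [mul_map_mk_cons] at hc' hd'
    have hstep := wball_subset_wball_mul_map_mk (g := g) hφ x hN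
    have hrest := ih hV (hstep he) (hstep hf) hc' hd'
    have hquad := areaAtMost_quadrilateral hφ hg hc hd
      (wball_mono (N.le_succ.trans hN) he) (wball_mono (N.le_succ.trans hN) hf)
    convert (hrest.conj (geo c e)).mul hquad using 1
    · simp only [polyPath]
      group
    · simp only [numSides]
      omega

theorem PolygonBound.relabel (hφ : Surjective φ) (hg : IsGeodesicSystem φ geo) (hN : N + 1 ≤ T)
    (hl : φ (FreeGroup.mk l) = 1) (hU : IsLabelling φ N g l (c :: U))
    (hV : IsLabelling φ N g l (d :: V)) (hn : numSides c U c ≤ 2 * n)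
    (h : PolygonBound geo (triv φ (8 * T)) (c :: U) K) :
    PolygonBound geo (triv φ (8 * T)) (d :: V) (K + 8 * n) := by
  rcases Nat.lt_or_ge 2 (numSides d V d) with hd2 | hd2
  swap
  · exact .of_numSides_le_two hg hd2
  obtain _ | @⟨_, _, x, l, _, hc, hU⟩ := hU
  obtain _ | ⟨hd, hV⟩ := hV
  have hend : g * φ (FreeGroup.mk [x]) * φ (FreeGroup.mk l) = g := by
    rw [← mul_map_mk_cons, hl, mul_one]
  have hstep := wball_subset_wball_mul_map_mk (g := g) hφ x hN
  have hladder := areaAtMost_ladder hφ hg hN hU hV (hstep hc) (hstep hd)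
    (hend.symm ▸ wball_mono (N.le_succ.trans hN) hc)
    (hend.symm ▸ wball_mono (N.le_succ.trans hN) hd)
  have hprod := (h.inv.mul hladder).inv.conj (geo c d)⁻¹
  rw [PolygonBound]
  convert hprod.mono (k := 3 * (numSides d V d - 2) + (K + 8 * n)) (by omega) using 1
  group

theorem exists_labelling_of_length_le {m : ℕ} (hφ : Surjective φ) (hg : IsGeodesicSystem φ geo)
    (hmT : m ≤ T) (hl : l ≠ []) (hlm : l.length ≤ m) :
    ∃ V, IsLabelling φ m g l (g :: V) ∧ numSides g V (g * φ (FreeGroup.mk l)) ≤ 1 ∧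
      AreaAtMost (triv φ (8 * T))
        (FreeGroup.mk l * (polyPath geo g V (g * φ (FreeGroup.mk l)))⁻¹) 1 := by
  have hsides := numSides_replicate_le g (g * φ (FreeGroup.mk l)) (l.length - 1)
  refine ⟨List.replicate (l.length - 1) g, ?_, hsides, ?_⟩
  · have h := IsLabelling.replicate hφ (N := 0) (wdist_self g).le hlm
    rwa [zero_add, ← Nat.sub_add_cancel (List.length_pos_iff.2 hl), List.replicate_succ] at h
  · rw [polyPath_eq_geo hg hsides]
    refine .of_mem ⟨?_, by simp [hg.map]⟩
    have := wnorm_mul_le (FreeGroup.mk l) (geo g (g * φ (FreeGroup.mk l)))⁻¹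
    have := wnorm_inv (geo g (g * φ (FreeGroup.mk l)))
    have := wnorm_mk_le l
    have := (hg.wnorm_le g (g * φ (FreeGroup.mk l))).trans (wdist_mul_right_le g _)
    omega

theorem exists_coarse_labelling {m : ℕ} (g : G) {l : Word ι} (hφ : Surjective φ)
    (hg : IsGeodesicSystem φ geo) (hm : 0 < m) (hmT : m ≤ T) (hl : l ≠ []) :
    ∃ V n, IsLabelling φ m g l (g :: V) ∧ numSides g V (g * φ (FreeGroup.mk l)) ≤ n + 1 ∧
      m * n ≤ l.length ∧
      AreaAtMost (triv φ (8 * T))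
        (FreeGroup.mk l * (polyPath geo g V (g * φ (FreeGroup.mk l)))⁻¹) (n + 1) := by
  by_cases hlm : l.length ≤ m
  · obtain ⟨V, hV, hsides, harea⟩ := exists_labelling_of_length_le (g := g) hφ hg hmT hl hlm
    exact ⟨V, 0, hV, hsides, Nat.zero_le _, harea⟩
  obtain ⟨l₁, l₂, hsplit, hl₁, hl₂⟩ : ∃ l₁ l₂, l = l₁ ++ l₂ ∧ l₁.length = m ∧ l₂ ≠ [] :=
    ⟨l.take m, l.drop m, (List.take_append_drop m l).symm,
      by rw [List.length_take]; omega, by rw [Ne, List.drop_eq_nil_iff]; omega⟩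
  obtain ⟨V₁, hV₁, hsides₁, harea₁⟩ := exists_labelling_of_length_le (g := g) hφ hg hmT
    (List.ne_nil_of_length_pos (hl₁ ▸ hm)) hl₁.le
  obtain ⟨V₂, n, hV₂, hsides₂, hn, harea₂⟩ :=
    exists_coarse_labelling (g * φ (FreeGroup.mk l₁)) hφ hg hm hmT hl₂
  subst hsplit
  refine ⟨V₁ ++ g * φ (FreeGroup.mk l₁) :: V₂, n + 1, hV₁.append hV₂, ?_, ?_, ?_⟩
  · rw [numSides_append, mul_map_mk_append]
    omega
  · rw [List.length_append, mul_add, hl₁]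
    omega
  · rw [polyPath_append, mul_map_mk_append, mk_append]
    convert (harea₂.conj (FreeGroup.mk l₁)).mul harea₁ using 1
    group
termination_by l.length
decreasing_by
  have : l.length = m + l₂.length := by simp [hsplit, hl₁]
  omega

end Comparison

section LayeringBound

variable {φ : FreeGroup ι →* G} {geo : G → G → FreeGroup ι} {g c d : G} {M N T m k K K' r b : ℕ}
  {x : ι × Bool} {l l' s s' t t' : Word ι} {D U V : List G}

namespace PolygonBound

theorem face (hφ : Surjective φ) (hg : IsGeodesicSystem φ geo) (hN : N + 2 ≤ T)
    (hc : c ∈ wball φ g N) (hU : IsLabelling φ N (g * φ (FreeGroup.mk [x])) l U)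
    (hl : φ (FreeGroup.mk (x :: l)) = 1)
    (h : PolygonBound geo (triv φ (8 * T)) (U ++ List.replicate k c) K) :
    PolygonBound geo (triv φ (8 * T)) (c :: U) K := by
  refine cons_of_replicate hg (smallTriangles_wball hφ hg (g * φ (FreeGroup.mk [x])) T) k
    h.rotate (hU.endsIn hφ (wball_mono (by omega)) ?_)
    (wball_subset_wball_mul_map_mk hφ x (by omega) hc)
  rw [← mul_map_mk_cons, hl, mul_one]
  exact wball_subset_wball_mul_map_mk hφ x hN

theorem glue_of_isLabelling (hφ : Surjective φ) (hg : IsGeodesicSystem φ geo) (hN : N + 2 ≤ T)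
    (hc : c ∈ wball φ g N) (hd : d ∈ wball φ (g * φ (FreeGroup.mk [x])) N)
    (hl : φ (FreeGroup.mk l) = 1) (hl' : φ (FreeGroup.mk l') = 1)
    (hU : IsLabelling φ N (g * φ (FreeGroup.mk [x])) l U) (hV : IsLabelling φ N g l' V)
    (hUK : PolygonBound geo (triv φ (8 * T)) U K)
    (hVK : PolygonBound geo (triv φ (8 * T)) V K') :
    PolygonBound geo (triv φ (8 * T)) (c :: (U ++ d :: V)) (K + K') := by
  refine glue hg (smallTriangles_wball hφ hg (g * φ (FreeGroup.mk [x])) T) hUK hVK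
    (hU.endsIn hφ (wball_mono (by omega)) ?_)
    (hV.endsIn hφ (wball_subset_wball_mul_map_mk hφ x (by omega)) ?_)
    (wball_subset_wball_mul_map_mk hφ x (by omega) hc) (wball_mono (by omega) hd)
  · rw [hl, mul_one]
    exact wball_mono (by omega)
  · rw [hl', mul_one]
    exact wball_subset_wball_mul_map_mk hφ x hN

theorem of_coarse_labelling (hφ : Surjective φ) (hg : IsGeodesicSystem φ geo) (hm : 0 < m)
    (hmT : m + 1 ≤ T) (hN : N + 1 ≤ T) (hl : φ (FreeGroup.mk l) = 1) (hD : IsLabelling φ N g l D)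
    (h : ∀ V, IsLabelling φ m g l V → PolygonBound geo (triv φ (8 * T)) V K) :
    PolygonBound geo (triv φ (8 * T)) D (K + 8 * (l.length / m)) := by
  cases hD with
  | nil => trivial
  | @cons g d x l D hd hD =>
    obtain ⟨V, n, hV, hsides, hn, -⟩ :=
      exists_coarse_labelling g hφ hg hm (T := T) (by omega) (List.cons_ne_nil x l)
    rw [hl, mul_one] at hsides
    have hclosed : numSides g V g ≤ 2 * n := by
      rcases n.eq_zero_or_pos with rfl | hpos
      · exact (numSides_eq_zero hsides).le
      · omega
    have hbound := relabel hφ hg (N := T - 1) (by omega) hl (hV.mono (by omega))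
      ((IsLabelling.cons hd hD).mono (by omega)) hclosed (h _ hV)
    have : n ≤ (x :: l).length / m := (Nat.le_div_iff_mul_le hm).2 (by rwa [mul_comm])
    exact hbound.mono (by omega)

end PolygonBound

/-- The polygons whose vertices label the two parts `s` and `t` of the boundary word of a layer,
starting at `g`, satisfy `PolygonBound` with the constant `K`. The points labelling `s` are within
`b` of the boundary and those labelling the deeper part `t` within `b + M`. -/
def LayerBound (φ : FreeGroup ι →* G) (geo : G → G → FreeGroup ι) (T M b : ℕ) (g : G)
    (s t : Word ι) (K : ℕ) : Prop :=
  ∀ C D, IsLabelling φ b g s C → IsLabelling φ (b + M) (g * φ (FreeGroup.mk s)) t D →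
    PolygonBound geo (triv φ (8 * T)) (C ++ D) K

namespace LayerBound

theorem face (hφ : Surjective φ) (hg : IsGeodesicSystem φ geo) (hT : b + M + 2 ≤ T)
    (ht' : t'.length ≤ M) (hclosed : φ (FreeGroup.mk (x :: (s ++ t))) = 1)
    (h : LayerBound φ geo T M b (g * φ (FreeGroup.mk [x])) s (t ++ t') K) :
    LayerBound φ geo T M b g (x :: s) t K := by
  rintro _ D (_ | @⟨_, c, _, _, C, hc, hC⟩) hD
  rw [mul_map_mk_cons] at hD
  have hend : g * φ (FreeGroup.mk [x]) * φ (FreeGroup.mk s) * φ (FreeGroup.mk t) = g := by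
    rw [← mul_map_mk_cons, ← mul_map_mk_append, List.cons_append, hclosed, mul_one]
  have hpoly := h C _ hC (hD.append (hend.symm ▸ IsLabelling.replicate hφ hc ht'))
  have hb := Nat.le_add_right b M
  exact .face hφ hg hT (wball_mono hb hc) ((hC.mono hb).append hD) hclosed (by simpa using hpoly)

theorem glueSame (hφ : Surjective φ) (hg : IsGeodesicSystem φ geo) (hT : b + M + 2 ≤ T)
    (hs : φ (FreeGroup.mk s) = 1) (ht : φ (FreeGroup.mk (s' ++ t)) = 1)
    (hK : LayerBound φ geo T M b (g * φ (FreeGroup.mk [x])) s [] K)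
    (hK' : LayerBound φ geo T M b g s' t K') :
    LayerBound φ geo T M b g (x :: (s ++ invLetter x :: s')) t (K + K') := by
  rintro _ D (_ | @⟨_, c, _, _, C, hc, hC⟩) hD
  obtain ⟨U, V, rfl, hU, hV⟩ := hC.exists_append
  have hend : g * φ (FreeGroup.mk [x]) * φ (FreeGroup.mk [invLetter x]) = g := by
    rw [mk_invLetter, map_inv, mul_inv_cancel_right]
  rw [mul_map_mk_cons, mul_map_mk_append, hs, mul_one, mul_map_mk_cons, hend] at hD
  rw [hs, mul_one] at hV
  obtain _ | @⟨_, d, _, _, V, hd, hV⟩ := hV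
  rw [hend] at hV
  have hb := Nat.le_add_right b M
  have hpoly := PolygonBound.glue_of_isLabelling hφ hg hT (wball_mono hb hc) (wball_mono hb hd) hs
    ht (hU.mono hb) ((hV.mono hb).append hD) (by simpa using hK U [] hU (.nil _)) (hK' V D hV hD)
  simpa using hpoly

theorem glueNext (hφ : Surjective φ) (hg : IsGeodesicSystem φ geo) (hT : b + M + 2 ≤ T)
    (hs : φ (FreeGroup.mk (s ++ t)) = 1) (ht' : φ (FreeGroup.mk t') = 1)
    (hK : LayerBound φ geo T M b (g * φ (FreeGroup.mk [x])) s t K)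
    (hK' : LayerBound φ geo T M b g [] t' K') :
    LayerBound φ geo T M b g (x :: s) (t ++ invLetter x :: t') (K + K') := by
  rintro _ D (_ | @⟨_, c, _, _, C, hc, hC⟩) hD
  rw [mul_map_mk_cons] at hD
  obtain ⟨U, V, rfl, hU, hV⟩ := hD.exists_append
  rw [← mul_map_mk_append, hs, mul_one] at hV
  obtain _ | @⟨_, d, _, _, V, hd, hV⟩ := hV
  rw [mk_invLetter, map_inv, mul_inv_cancel_right] at hV
  have hb := Nat.le_add_right b M
  have hpoly := PolygonBound.glue_of_isLabelling hφ hg hT (wball_mono hb hc) hd hs ht'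
    ((hC.mono hb).append hU) hV (hK C U hC hU) (hK' [] V (.nil g) (by simpa [mk_nil] using hV))
  simpa using hpoly

theorem descend (h : LayerBound φ geo T M (b + M) g t [] K) :
    LayerBound φ geo T M b g [] t K := by
  rintro _ D ⟨⟩ hD
  simpa using h D [] (by simpa [mk_nil] using hD) (.nil _)

theorem descend_coarse (hφ : Surjective φ) (hg : IsGeodesicSystem φ geo) (hm : 0 < m)
    (hmT : m + 1 ≤ T) (hT : b + M + 1 ≤ T) (ht : φ (FreeGroup.mk t) = 1)
    (h : LayerBound φ geo T M m g t [] K) :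
    LayerBound φ geo T M b g [] t (K + 8 * (t.length / m)) := by
  rintro _ D ⟨⟩ hD
  rw [mk_nil, map_one, mul_one] at hD
  exact .of_coarse_labelling hφ hg hm hmT hT ht hD fun V hV => by simpa using h V [] hV (.nil _)

theorem mono (h : LayerBound φ geo T M b g s t K) (hK : K ≤ K') :
    LayerBound φ geo T M b g s t K' :=
  fun C D hC hD => (h C D hC hD).mono hK

end LayerBound

/- Labels are within `b` of the current layer and drift by at most `M` at each of the `r + 1`
descents up to the next coarse layer, where the distance is reset to `m`. -/
theorem Layering.layerBound {c : ℕ → ℕ} (hφ : Surjective φ) (hg : IsGeodesicSystem φ geo)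
    (hmT : (M + 1) * m + 2 ≤ T) (h : Layering φ M m s t c) (hr : r < m)
    (hT : b + M * (r + 1) + 2 ≤ T) : LayerBound φ geo T M b g s t (8 * (c r / m)) := by
  have hbM {b r : ℕ} (hT : b + M * (r + 1) + 2 ≤ T) : b + M + 2 ≤ T := by
    have : M ≤ M * (r + 1) := Nat.le_mul_of_pos_right M r.succ_pos
    omega
  have hadd (i j : ℕ) : 8 * (i / m) + 8 * (j / m) ≤ 8 * ((i + j) / m) := by
    rw [← mul_add]
    exact Nat.mul_le_mul_left 8 Nat.div_add_div_le_add_div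
  induction h generalizing g b r with
  | nil => rintro _ _ ⟨⟩ ⟨⟩; trivial
  | face ht' hx h ih =>
    exact .face hφ hg (hbM hT) ht' (Layering.face ht' hx h).map_eq_one (ih hr hT)
  | glueSame hs hs' ih ih' =>
    exact (LayerBound.glueSame hφ hg (hbM hT) (by simpa using hs.map_eq_one) hs'.map_eq_one
      (ih hr hT) (ih' hr hT)).mono (hadd _ _)
  | glueNext hs ht' ih ih' =>
    exact (LayerBound.glueNext hφ hg (hbM hT) hs.map_eq_one (by simpa using ht'.map_eq_one)
      (ih hr hT) (ih' hr hT)).mono (hadd _ _)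
  | @descend t _ h ih =>
    have ht : φ (FreeGroup.mk t) = 1 := by simpa using h.map_eq_one
    cases r with
    | zero =>
      have := hbM hT
      exact (LayerBound.descend_coarse hφ hg hr (by nlinarith) (by omega) ht
        (ih (r := m - 1) (by omega) (by rw [Nat.sub_add_cancel hr]; lia))).mono (hadd _ _)
    | succ r =>
      rw [mul_add M (r + 1) 1, mul_one] at hT
      exact .descend (ih (by omega) (by omega))

end LayeringBound

section Coarsening

variable {φ : FreeGroup ι →* G} {M m A : ℕ} {w : FreeGroup ι}

theorem exists_lt_div_le_of_sum_le {c : ℕ → ℕ} {a : ℕ} (hm : 0 < m)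
    (h : ∑ r ∈ Finset.range m, c r ≤ a) : ∃ r < m, c r / m ≤ a / (m * m) := by
  obtain ⟨r, hr, hcr⟩ : ∃ r ∈ Finset.range m, c r < a / m + 1 := by
    refine Finset.exists_lt_of_sum_lt (g := fun _ => a / m + 1) (h.trans_lt ?_)
    rw [Finset.sum_const, Finset.card_range, smul_eq_mul]
    exact Nat.lt_mul_div_succ a hm
  refine ⟨r, Finset.mem_range.1 hr, ?_⟩
  rw [← Nat.div_div_eq_div_mul]
  exact Nat.div_le_div_right (Nat.le_of_lt_succ hcr)

theorem triv_rangeRestrict (k : ℕ) : triv φ.rangeRestrict k = triv φ k := by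
  ext w
  simp [triv, Subtype.ext_iff]

theorem AreaAtMost.coarsen_of_surjective (hφ : Surjective φ) (hm : 0 < m)
    (h : AreaAtMost (triv φ (M + 1)) w A) :
    AreaAtMost (triv φ (8 * ((M + 1) * m + 2))) w
      (4 * (wnorm w / m) + 8 * (M * A / (m * m)) + 1) := by
  obtain ⟨l, rfl, hl⟩ := exists_word w
  rcases eq_or_ne l [] with rfl | hne
  · exact AreaAtMost.one.mono (Nat.zero_le _)
  obtain ⟨geo, hg⟩ := exists_isGeodesicSystem hφ
  obtain ⟨c, hc, hcA⟩ := exists_layering hm l [] (by simpa using h)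
  obtain ⟨r, hr, hcr⟩ := exists_lt_div_le_of_sum_le hm hcA
  obtain ⟨V, n, hV, hsides, hn, harea⟩ :=
    exists_coarse_labelling (T := (M + 1) * m + 2) 1 hφ hg hm (by nlinarith) hne
  have hpoly := hc.layerBound hφ hg le_rfl hr (b := m) (by nlinarith) _ [] hV (.nil _)
  rw [List.append_nil] at hpoly
  have hl1 : (1 : G) * φ (FreeGroup.mk l) = 1 := by simpa using hc.map_eq_one
  rw [hl1] at hsides harea
  have hn' : n ≤ wnorm (FreeGroup.mk l) / m :=
    (Nat.le_div_iff_mul_le hm).2 (by rwa [mul_comm, ← hl])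
  rw [List.length_nil, zero_add] at hcr
  convert (harea.mul hpoly).mono ?_ using 1
  · group
  · omega

theorem AreaAtMost.coarsen (hm : 0 < m) (h : AreaAtMost (triv φ (M + 1)) w A) :
    AreaAtMost (triv φ (8 * ((M + 1) * m + 2))) w
      (4 * (wnorm w / m) + 8 * (M * A / (m * m)) + 1) := by
  rw [← triv_rangeRestrict] at h ⊢
  exact h.coarsen_of_surjective φ.rangeRestrict_surjective hm

end Coarsening

section Spectrum

variable {φ : FreeGroup ι →* G} {R : Set (FreeGroup ι)} {w : FreeGroup ι} {C M k m n p : ℕ}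

theorem map_eq_one_of_mem_normalClosure_triv (hw : w ∈ Subgroup.normalClosure (triv φ k)) :
    φ w = 1 :=
  (areaAtMost_area hw).map_eq_one

theorem triv_mono (h : k ≤ m) : triv φ k ⊆ triv φ m :=
  fun _ hw => ⟨hw.1.trans h, hw.2⟩

section Finite

variable [Finite ι]

theorem finite_wnorm_le (n : ℕ) : {w : FreeGroup ι | wnorm w ≤ n}.Finite := by
  refine ((List.finite_length_le (ι × Bool) n).image FreeGroup.mk).subset fun w hw => ?_
  obtain ⟨l, hlw, hl⟩ := exists_word w
  exact ⟨l, hl.trans_le hw, hlw⟩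

theorem bddAbove_area (S : Set (FreeGroup ι)) (H : Subgroup (FreeGroup ι)) (n : ℕ) :
    BddAbove (area S '' {w | w ∈ H ∧ wnorm w ≤ n}) :=
  (((finite_wnorm_le n).subset fun _ hw => hw.2).image _).bddAbove

theorem area_le_dehn (hw : w ∈ Subgroup.normalClosure R) (hn : wnorm w ≤ n) :
    area R w ≤ dehn R n :=
  le_csSup (bddAbove_area R _ n) ⟨w, ⟨hw, hn⟩, rfl⟩

theorem area_le_isoSpec (hw : w ∈ Subgroup.normalClosure (triv φ k)) (hn : wnorm w ≤ n) :
    area (triv φ m) w ≤ isoSpec φ k m n :=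
  le_csSup (bddAbove_area (triv φ m) _ n) ⟨w, ⟨hw, hn⟩, rfl⟩

theorem dehn_le_isoSpec_mul_dehn (hker : φ.ker = Subgroup.normalClosure R) (hR : R ⊆ triv φ k)
    (hkm : k ≤ m) (hnp : n ≤ p) : dehn R n ≤ isoSpec φ k m p * dehn R m := by
  refine csSup_le' ?_
  rintro _ ⟨w, ⟨hw, hn⟩, rfl⟩
  have hwk := Subgroup.normalClosure_mono hR hw
  have hwm := Subgroup.normalClosure_mono (triv_mono hkm) hwk
  have hrel : ∀ s ∈ triv φ m, AreaAtMost R s (dehn R m) := fun s hs =>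
    have hsR : s ∈ Subgroup.normalClosure R := hker ▸ hs.2
    (areaAtMost_area hsR).mono (area_le_dehn hsR hs.1)
  exact ((areaAtMost_area hwm).mono (area_le_isoSpec hwk (hn.trans hnp))).comp hrel |>.area_le

theorem isoSpec_le_of_dehn (hker : φ.ker = Subgroup.normalClosure R) (hR : R ⊆ triv φ (M + 1))
    (hm : 0 < m) (hp : 8 * ((M + 1) * m + 2) ≤ p) :
    isoSpec φ k p n ≤ 4 * (n / m) + 8 * (M * dehn R n / (m * m)) + 1 := by
  refine csSup_le' ?_
  rintro _ ⟨w, ⟨hw, hn⟩, rfl⟩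
  have hwR : w ∈ Subgroup.normalClosure R := hker ▸ map_eq_one_of_mem_normalClosure_triv hw
  have h := ((areaAtMost_area hwR).mono (area_le_dehn hwR hn)).mono_set hR
  refine ((h.coarsen hm).mono_set (triv_mono hp)).area_le.trans ?_
  gcongr

theorem isoSpecR_le_of_dehn_le (hker : φ.ker = Subgroup.normalClosure R)
    (hR : R ⊆ triv φ (M + 1)) (hupper : ∀ n : ℕ, 0 < n → (dehn R n : ℝ) ≤ C * (n : ℝ) ^ 2) :
    SpecLE (isoSpecR φ) (fun _ m n => ((n : ℝ) / m) ^ 2) := by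
  refine ⟨8 * (M + 3) + 8 * M * C, by omega, fun k m n _ hm hn _ => ?_⟩
  have hiso := isoSpec_le_of_dehn (k := k) (n := n) (p := (8 * (M + 3) + 8 * M * C) * m)
    hker hR hm (by nlinarith [Nat.zero_le (8 * M * C * m)])
  have hspec : (isoSpec φ k ((8 * (M + 3) + 8 * M * C) * m) n : ℝ) ≤
      4 * (n / m) + 8 * M * C * (n / m) ^ 2 + 1 :=
    calc (isoSpec φ k ((8 * (M + 3) + 8 * M * C) * m) n : ℝ)
        ≤ 4 * ((n / m : ℕ) : ℝ) + 8 * ((M * dehn R n / (m * m) : ℕ) : ℝ) + 1 := by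
          exact_mod_cast hiso
      _ ≤ 4 * (n / m) + 8 * (M * dehn R n / (m * m)) + 1 := by
          gcongr <;> exact Nat.cast_div_le.trans (by push_cast; rfl)
      _ ≤ 4 * (n / m) + 8 * (M * (C * n ^ 2) / (m * m)) + 1 := by
          gcongr
          exact hupper n hn
      _ = 4 * (n / m) + 8 * M * C * (n / m) ^ 2 + 1 := by
          field_simp
  refine hspec.trans ?_
  set K : ℕ := 8 * (M + 3) + 8 * M * C
  have hK4 : (4 : ℝ) ≤ K := by exact_mod_cast (by omega : 4 ≤ K)
  have hKMC : (8 * M * C : ℝ) ≤ K := by exact_mod_cast (by omega : 8 * M * C ≤ K)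
  have hscale : (n / m : ℝ) ≤ (K * n : ℕ) / m := by
    gcongr
    exact Nat.le_mul_of_pos_left n (by omega)
  have hquad : 8 * M * C * (n / m : ℝ) ^ 2 ≤ K * ((K * n : ℕ) / m : ℝ) ^ 2 := by gcongr
  have hlin : 4 * (n / m : ℝ) ≤ K * n / m := by
    rw [mul_div_assoc]
    gcongr
  linarith

theorem le_isoSpecR_of_le_dehn (hker : φ.ker = Subgroup.normalClosure R)
    (hR : R ⊆ triv φ (M + 1)) (hupper : ∀ n : ℕ, 0 < n → (dehn R n : ℝ) ≤ C * (n : ℝ) ^ 2)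
    (hlower : ∀ n : ℕ, 0 < n → (n : ℝ) ^ 2 ≤ C * (dehn R (C * n) : ℝ) + C * n) :
    SpecLE (fun _ m n => ((n : ℝ) / m) ^ 2) (isoSpecR φ) := by
  set K := C * C + C + M + 1
  refine ⟨K, by omega, fun k m n hk hm hn hkm => ?_⟩
  have hm' : (1 : ℝ) ≤ m := by exact_mod_cast hm
  have hKC : (C : ℝ) ≤ K := by exact_mod_cast (by omega : C ≤ K)
  have hKCC : (C * C : ℝ) ≤ K := by exact_mod_cast (by omega : C * C ≤ K)
  have hMk : M + 1 ≤ K * k := (by omega : M + 1 ≤ K).trans (Nat.le_mul_of_pos_right K hk)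
  set I := isoSpec φ (K * k) m (K * n)
  have hdehn : (dehn R (C * n) : ℝ) ≤ I * dehn R m := by
    exact_mod_cast dehn_le_isoSpec_mul_dehn hker (hR.trans (triv_mono hMk)) hkm
      (Nat.mul_le_mul_right n (by omega : C ≤ K))
  have hsq : (n : ℝ) ^ 2 ≤ C * (I * (C * m ^ 2)) + C * n := by
    refine (hlower n hn).trans ?_
    gcongr
    exact hdehn.trans (by gcongr; exact hupper m hm)
  have hratio : (n / m : ℝ) ^ 2 ≤ C * C * I + C * n / m :=
    calc (n / m : ℝ) ^ 2 = n ^ 2 / m ^ 2 := div_pow _ _ _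
      _ ≤ (C * (I * (C * m ^ 2)) + C * n) / m ^ 2 := by gcongr
      _ = C * C * I + C * n / m / m := by field_simp
      _ ≤ C * C * I + C * n / m := by
          gcongr
          exact div_le_self (by positivity) hm'
  have hscale : ((n : ℝ) / (K * m : ℕ)) ^ 2 ≤ ((n : ℝ) / m) ^ 2 := by
    gcongr
    exact Nat.le_mul_of_pos_left m (by omega)
  have hcoeff : (C * C * I + C * n / m : ℝ) ≤ K * I + K * n / m := by gcongr
  exact (hscale.trans (hratio.trans hcoeff)).trans (le_add_of_nonneg_right K.cast_nonneg)

theorem isoSpec_of_quadratic_dehn_general (φ : FreeGroup ι →* G) (R : Set (FreeGroup ι))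
    (hR : R.Finite) (hker : φ.ker = Subgroup.normalClosure R) (C : ℕ)
    (hupper : ∀ n : ℕ, 0 < n → (dehn R n : ℝ) ≤ C * (n : ℝ) ^ 2)
    (hlower : ∀ n : ℕ, 0 < n → (n : ℝ) ^ 2 ≤ C * (dehn R (C * n) : ℝ) + C * n) :
    SpecEquiv (isoSpecR φ) (fun _ m n => ((n : ℝ) / m) ^ 2) := by
  obtain ⟨M, hM⟩ := (hR.image wnorm).bddAbove
  have hRM : R ⊆ triv φ (M + 1) := fun r hr =>
    ⟨(hM ⟨r, hr, rfl⟩).trans M.le_succ, hker.ge (Subgroup.subset_normalClosure hr)⟩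
  exact ⟨isoSpecR_le_of_dehn_le hker hRM hupper, le_isoSpecR_of_le_dehn hker hRM hupper hlower⟩

end Finite

end Spectrum

/-- A finitely presented group with quadratic Dehn function has
isoperimetric spectrum equivalent to `(n/m)²`. -/
theorem isoSpec_of_quadratic_dehn {G : Type} [Group G] {a : ℕ}
    (φ : FreeGroup (Fin a) →* G) (hφ : Surjective φ)
    (R : Set (FreeGroup (Fin a))) (hR : R.Finite)
    (hker : φ.ker = Subgroup.normalClosure R)
    (C : ℕ) (hC : 0 < C)
    (hupper : ∀ n : ℕ, 0 < n → (dehn R n : ℝ) ≤ C * (n : ℝ) ^ 2)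
    (hlower : ∀ n : ℕ, 0 < n → (n : ℝ) ^ 2 ≤ C * (dehn R (C * n) : ℝ) + C * n) :
    SpecEquiv (isoSpecR φ) (fun _ m n => ((n : ℝ) / m) ^ 2) :=
  isoSpec_of_quadratic_dehn_general φ R hR hker C hupper hlower

end IsoSpecPaper
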